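/- There exists a smooth even function φ : ℝ → ℝ such that: φ(r) ≥ 0 for all r; φ(r) = r² for |r| ≤ 1; φ(r) = 0 for |r| ≥ 3; and φ''(r) ≤ 2 for all r ∈ ℝ. -/

import Mathlib

/-!
It suffices to find a smooth convex `w` with `w r = 0` for `-1 ≤ r`, `w r = r ^ 2` for `r ≤ -3` and
`w r ≤ r ^ 2` everywhere: then `φ r = r ^ 2 - (w r + w (-r))` is the cutoff, since `r ^ 2 - φ r` is
convex and at least one of `w r`, `w (-r)` vanishes.

Such a `w` is a regularization of `max (r ^ 2 - β (r + 3)) 0`, where `β x = x ^ 2 * exp (-1 / x)`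
for `0 < x` and `β x = 0` for `x ≤ 0`. With `u = 1 / x`, the bound `β'' x ≤ 2` is
`1 + u + u ^ 2 / 2 ≤ exp u`, so `r ^ 2 - β (r + 3)` is convex; and `1 - u ≤ exp (-u)` makes it at
most `-1` for `-1 ≤ r`. Convexity survives composition with a convex nondecreasing smoothing of the
positive part.
-/

open Set

theorem deriv_deriv_nonneg_of_convexOn {f : ℝ → ℝ} (hf : Differentiable ℝ f)
    (hconv : ConvexOn ℝ univ f) (x : ℝ) : 0 ≤ deriv (deriv f) x :=
  (monotoneOn_univ.1 (hconv.monotoneOn_deriv fun y _ ↦ hf y)).deriv_nonneg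

theorem deriv_deriv_le_of_convexOn_sub {f g : ℝ → ℝ} (hf : ContDiff ℝ 2 f) (hg : ContDiff ℝ 2 g)
    (hconv : ConvexOn ℝ univ (g - f)) (x : ℝ) : deriv (deriv f) x ≤ deriv (deriv g) x := by
  have hf₁ := hf.differentiable two_ne_zero
  have hg₁ := hg.differentiable two_ne_zero
  have hderiv : deriv (g - f) = deriv g - deriv f := funext fun y ↦ deriv_sub (hg₁ y) (hf₁ y)
  have hnonneg := deriv_deriv_nonneg_of_convexOn (hg₁.sub hf₁) hconv x
  rw [hderiv, deriv_sub (hg.differentiable_deriv_two x) (hf.differentiable_deriv_two x)] at hnonneg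
  exact sub_nonneg.1 hnonneg

/-- The primitive of `Real.smoothTransition` vanishing on `t ≤ 0`; it has slope `1` on `1 ≤ t`. -/
noncomputable def smoothTransitionPrimitive (t : ℝ) : ℝ := ∫ s in 0..t, Real.smoothTransition s

namespace smoothTransitionPrimitive

theorem hasDerivAt (t : ℝ) :
    HasDerivAt smoothTransitionPrimitive (Real.smoothTransition t) t :=
  (Real.smoothTransition.continuous.integral_hasStrictDerivAt 0 t).hasDerivAt

theorem differentiable : Differentiable ℝ smoothTransitionPrimitive :=
  fun t ↦ (hasDerivAt t).differentiableAt

theorem deriv_eq : deriv smoothTransitionPrimitive = Real.smoothTransition :=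
  funext fun t ↦ (hasDerivAt t).deriv

theorem contDiff : ContDiff ℝ (⊤ : ℕ∞) smoothTransitionPrimitive :=
  contDiff_infty_iff_deriv.2 ⟨differentiable, deriv_eq ▸ Real.smoothTransition.contDiff⟩

theorem monotone : Monotone smoothTransitionPrimitive :=
  monotone_of_deriv_nonneg differentiable fun t ↦ deriv_eq ▸ Real.smoothTransition.nonneg t

theorem convexOn : ConvexOn ℝ univ smoothTransitionPrimitive :=
  Monotone.convexOn_univ_of_deriv differentiable (deriv_eq ▸ Real.smoothTransition.monotone)

theorem of_nonpos {t : ℝ} (ht : t ≤ 0) : smoothTransitionPrimitive t = 0 := by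
  have hzero : EqOn Real.smoothTransition 0 (uIcc 0 t) := fun s hs ↦
    Real.smoothTransition.zero_of_nonpos (uIcc_of_ge ht ▸ hs).2
  simpa [smoothTransitionPrimitive] using intervalIntegral.integral_congr hzero

theorem of_one_le {t : ℝ} (ht : 1 ≤ t) :
    smoothTransitionPrimitive t = smoothTransitionPrimitive 1 + (t - 1) := by
  have hint (a b : ℝ) := Real.smoothTransition.continuous.intervalIntegrable
    (μ := MeasureTheory.volume) a b
  have hone : EqOn Real.smoothTransition 1 (uIcc 1 t) := fun s hs ↦
    Real.smoothTransition.one_of_one_le (uIcc_of_le ht ▸ hs).1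
  have htail : ∫ s in 1..t, Real.smoothTransition s = t - 1 := by
    rw [intervalIntegral.integral_congr hone]
    simp
  rw [smoothTransitionPrimitive, smoothTransitionPrimitive, ← htail,
    intervalIntegral.integral_add_adjacent_intervals (hint 0 1) (hint 1 t)]

theorem apply_one_nonneg : 0 ≤ smoothTransitionPrimitive 1 :=
  of_nonpos le_rfl ▸ monotone zero_le_one

theorem apply_one_le_one : smoothTransitionPrimitive 1 ≤ 1 := by
  simpa [smoothTransitionPrimitive] using intervalIntegral.integral_mono_on
    (μ := MeasureTheory.volume) zero_le_one
    (Real.smoothTransition.continuous.intervalIntegrable 0 1) intervalIntegrable_const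
    fun s _ ↦ Real.smoothTransition.le_one s

end smoothTransitionPrimitive

/-- A smooth convex nondecreasing function equal to `max t 0` for `1 ≤ |t|`. The shift makes the
affine part exactly `t`. -/
noncomputable def smoothPosPart (t : ℝ) : ℝ :=
  smoothTransitionPrimitive (t + (1 - smoothTransitionPrimitive 1))

namespace smoothPosPart

theorem contDiff : ContDiff ℝ (⊤ : ℕ∞) smoothPosPart :=
  smoothTransitionPrimitive.contDiff.comp (contDiff_id.add contDiff_const)

theorem monotone : Monotone smoothPosPart := fun _ _ h ↦
  smoothTransitionPrimitive.monotone (add_le_add_left h _)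

theorem convexOn : ConvexOn ℝ univ smoothPosPart :=
  smoothTransitionPrimitive.convexOn.translate_left _

theorem of_le_neg_one {t : ℝ} (ht : t ≤ -1) : smoothPosPart t = 0 :=
  smoothTransitionPrimitive.of_nonpos (by linarith [smoothTransitionPrimitive.apply_one_nonneg])

theorem of_one_le {t : ℝ} (ht : 1 ≤ t) : smoothPosPart t = t := by
  rw [smoothPosPart, smoothTransitionPrimitive.of_one_le
    (by linarith [smoothTransitionPrimitive.apply_one_le_one])]
  ring

end smoothPosPart

theorem hasDerivAt_expNegInvGlue (x : ℝ) :
    HasDerivAt expNegInvGlue (x⁻¹ ^ 2 * expNegInvGlue x) x := by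
  simpa using expNegInvGlue.hasDerivAt_polynomial_eval_inv_mul 1 x

theorem expNegInvGlue_of_pos {x : ℝ} (hx : 0 < x) : expNegInvGlue x = Real.exp (-x⁻¹) :=
  if_neg hx.not_ge

theorem one_sub_inv_le_expNegInvGlue {x : ℝ} (hx : 0 < x) : 1 - x⁻¹ ≤ expNegInvGlue x :=
  expNegInvGlue_of_pos hx ▸ Real.one_sub_le_exp_neg x⁻¹

theorem quadratic_inv_mul_expNegInvGlue_le_one (x : ℝ) :
    (1 + x⁻¹ + x⁻¹ ^ 2 / 2) * expNegInvGlue x ≤ 1 := by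
  rcases le_or_gt x 0 with hx | hx
  · simp [expNegInvGlue.zero_of_nonpos hx]
  · rw [expNegInvGlue_of_pos hx, Real.exp_neg, ← div_eq_mul_inv, div_le_one (Real.exp_pos _)]
    exact Real.quadratic_le_exp_of_nonneg (inv_nonneg.2 hx.le)

/-- A smooth convex function equal to `x ^ 2` for `x ≤ 0`, with at most linear growth on `0 ≤ x`. -/
noncomputable def halfParabola (x : ℝ) : ℝ := x ^ 2 * (1 - expNegInvGlue x)

namespace halfParabola

theorem contDiff : ContDiff ℝ (⊤ : ℕ∞) halfParabola :=
  (contDiff_id.pow 2).mul (contDiff_const.sub expNegInvGlue.contDiff)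

theorem hasDerivAt (x : ℝ) :
    HasDerivAt halfParabola (2 * x - (2 * x + 1) * expNegInvGlue x) x := by
  have h := (hasDerivAt_pow 2 x).mul ((hasDerivAt_expNegInvGlue x).const_sub 1)
  refine h.congr_deriv ?_
  rcases eq_or_ne x 0 with rfl | hx
  · simp
  · field_simp
    ring

theorem hasDerivAt_deriv (x : ℝ) :
    HasDerivAt (deriv halfParabola)
      (2 * (1 - (1 + x⁻¹ + x⁻¹ ^ 2 / 2) * expNegInvGlue x)) x := by
  rw [show deriv halfParabola = _ from funext fun y ↦ (hasDerivAt y).deriv]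
  have hlin := (hasDerivAt_id x).const_mul 2
  have h := hlin.sub ((hlin.add_const 1).mul (hasDerivAt_expNegInvGlue x))
  refine h.congr_deriv ?_
  rcases eq_or_ne x 0 with rfl | hx
  · simp
  · simp only [id]
    field_simp
    ring

theorem convexOn : ConvexOn ℝ univ halfParabola := by
  refine convexOn_univ_of_deriv2_nonneg (fun x ↦ (hasDerivAt x).differentiableAt)
    (fun x ↦ (hasDerivAt_deriv x).differentiableAt) fun x ↦ ?_
  rw [Function.iterate_succ_apply, Function.iterate_one, (hasDerivAt_deriv x).deriv]
  linarith [quadratic_inv_mul_expNegInvGlue_le_one x]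

theorem of_nonpos {x : ℝ} (hx : x ≤ 0) : halfParabola x = x ^ 2 := by
  rw [halfParabola, expNegInvGlue.zero_of_nonpos hx, sub_zero, mul_one]

theorem le_sq (x : ℝ) : halfParabola x ≤ x ^ 2 :=
  mul_le_of_le_one_right (sq_nonneg x) (sub_le_self 1 (expNegInvGlue.nonneg x))

theorem le_self {x : ℝ} (hx : 0 < x) : halfParabola x ≤ x :=
  calc
    x ^ 2 * (1 - expNegInvGlue x) ≤ x ^ 2 * x⁻¹ := by
      gcongr
      exact sub_le_comm.1 (one_sub_inv_le_expNegInvGlue hx)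
    _ = x := by field_simp

end halfParabola

/-- `r ^ 2 - β (r + 3)` in the notation of the header: the half-parabola based at `-3`, plus the
tangent line of `r ^ 2` there. -/
noncomputable def tangentHalfParabola (r : ℝ) : ℝ := halfParabola (r + 3) + (-6 * r - 9)

namespace tangentHalfParabola

theorem contDiff : ContDiff ℝ (⊤ : ℕ∞) tangentHalfParabola :=
  (halfParabola.contDiff.comp (contDiff_id.add contDiff_const)).add (by fun_prop)

theorem convexOn : ConvexOn ℝ univ tangentHalfParabola :=
  (halfParabola.convexOn.translate_left 3).add
    (((LinearMap.mulLeft ℝ (-6 : ℝ)).convexOn convex_univ).sub (concaveOn_const 9 convex_univ))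

theorem of_le_neg_three {r : ℝ} (hr : r ≤ -3) : tangentHalfParabola r = r ^ 2 := by
  rw [tangentHalfParabola, halfParabola.of_nonpos (by linarith)]
  ring

theorem le_sq (r : ℝ) : tangentHalfParabola r ≤ r ^ 2 := by
  rw [tangentHalfParabola]
  linarith [halfParabola.le_sq (r + 3)]

theorem le_neg_one {r : ℝ} (hr : -1 ≤ r) : tangentHalfParabola r ≤ -1 := by
  rw [tangentHalfParabola]
  linarith [halfParabola.le_self (show 0 < r + 3 by linarith)]

end tangentHalfParabola

/-- The smooth convex function `w` of the header: `0` for `-1 ≤ r` and `r ^ 2` for `r ≤ -3`. -/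
noncomputable def convexTail (r : ℝ) : ℝ := smoothPosPart (tangentHalfParabola r)

namespace convexTail

theorem contDiff : ContDiff ℝ (⊤ : ℕ∞) convexTail :=
  smoothPosPart.contDiff.comp tangentHalfParabola.contDiff

theorem convexOn : ConvexOn ℝ univ convexTail := by
  have hrange : Convex ℝ (tangentHalfParabola '' univ) :=
    (isPreconnected_univ.image _ tangentHalfParabola.contDiff.continuous.continuousOn).convex
  exact (smoothPosPart.convexOn.subset (subset_univ _) hrange).comp
    tangentHalfParabola.convexOn (smoothPosPart.monotone.monotoneOn _)

theorem of_neg_one_le {r : ℝ} (hr : -1 ≤ r) : convexTail r = 0 :=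
  smoothPosPart.of_le_neg_one (tangentHalfParabola.le_neg_one hr)

theorem of_le_neg_three {r : ℝ} (hr : r ≤ -3) : convexTail r = r ^ 2 := by
  rw [convexTail, tangentHalfParabola.of_le_neg_three hr, smoothPosPart.of_one_le (by nlinarith)]

theorem le_sq (r : ℝ) : convexTail r ≤ r ^ 2 := by
  rcases le_total (-1) r with hr | hr
  · exact of_neg_one_le hr ▸ sq_nonneg r
  · calc
      convexTail r ≤ smoothPosPart (r ^ 2) := smoothPosPart.monotone (tangentHalfParabola.le_sq r)
      _ = r ^ 2 := smoothPosPart.of_one_le (by nlinarith)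

end convexTail

/-- The even cutoff `φ` of the localized virial weight `R ^ 2 * φ (|x| / R)`. -/
noncomputable def virialCutoff (r : ℝ) : ℝ := r ^ 2 - (convexTail r + convexTail (-r))

namespace virialCutoff

theorem contDiff : ContDiff ℝ (⊤ : ℕ∞) virialCutoff :=
  (contDiff_id.pow 2).sub (convexTail.contDiff.add (convexTail.contDiff.comp contDiff_neg))

theorem neg (r : ℝ) : virialCutoff (-r) = virialCutoff r := by
  rw [virialCutoff, virialCutoff, neg_neg, neg_sq, add_comm]

theorem eq_sq_sub_convexTail_neg_abs (r : ℝ) :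
    virialCutoff r = r ^ 2 - convexTail (-|r|) := by
  rcases le_total 0 r with hr | hr
  · rw [virialCutoff, abs_of_nonneg hr, convexTail.of_neg_one_le (by linarith), zero_add]
  · rw [virialCutoff, abs_of_nonpos hr, neg_neg,
      convexTail.of_neg_one_le (r := -r) (by linarith), add_zero]

theorem nonneg (r : ℝ) : 0 ≤ virialCutoff r := by
  rw [eq_sq_sub_convexTail_neg_abs, sub_nonneg]
  simpa using convexTail.le_sq (-|r|)

theorem of_abs_le_one {r : ℝ} (hr : |r| ≤ 1) : virialCutoff r = r ^ 2 := by
  rw [eq_sq_sub_convexTail_neg_abs, convexTail.of_neg_one_le (neg_le_neg hr), sub_zero]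

theorem of_three_le_abs {r : ℝ} (hr : 3 ≤ |r|) : virialCutoff r = 0 := by
  rw [eq_sq_sub_convexTail_neg_abs, convexTail.of_le_neg_three (neg_le_neg hr), neg_sq, sq_abs,
    sub_self]

theorem convexOn_sq_sub : ConvexOn ℝ univ ((fun r ↦ r ^ 2) - virialCutoff) := by
  have hsum : (fun r ↦ r ^ 2) - virialCutoff =
      convexTail + convexTail ∘ (-LinearMap.id : ℝ →ₗ[ℝ] ℝ) := by
    ext r
    simp [virialCutoff]
  rw [hsum]
  exact convexTail.convexOn.add (convexTail.convexOn.comp_linearMap (-LinearMap.id))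

theorem deriv_deriv_le_two (r : ℝ) : deriv (deriv virialCutoff) r ≤ 2 := by
  have hsq : deriv (fun x : ℝ ↦ x ^ 2) = fun x ↦ 2 * x := by
    ext x
    simp
  calc
    deriv (deriv virialCutoff) r ≤ deriv (deriv fun x : ℝ ↦ x ^ 2) r :=
      deriv_deriv_le_of_convexOn_sub (contDiff_infty.1 contDiff 2) (by fun_prop) convexOn_sq_sub r
    _ = 2 := by simp [hsq]

end virialCutoff

/-- Existence of the cutoff function used in the localized virial identity:
a smooth even function `φ` with `φ ≥ 0`, `φ(r) = r²` for `|r| ≤ 1`, `φ(r) = 0`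
for `|r| ≥ 3`, and `φ'' ≤ 2` everywhere. -/
theorem exists_virial_cutoff :
    ∃ φ : ℝ → ℝ,
      ContDiff ℝ (⊤ : ℕ∞) φ ∧
      (∀ r : ℝ, φ (-r) = φ r) ∧
      (∀ r : ℝ, 0 ≤ φ r) ∧
      (∀ r : ℝ, |r| ≤ 1 → φ r = r ^ 2) ∧
      (∀ r : ℝ, 3 ≤ |r| → φ r = 0) ∧
      (∀ r : ℝ, deriv (deriv φ) r ≤ 2) :=
  ⟨virialCutoff, virialCutoff.contDiff, virialCutoff.neg, virialCutoff.nonneg,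
    fun _ ↦ virialCutoff.of_abs_le_one, fun _ ↦ virialCutoff.of_three_le_abs,
    virialCutoff.deriv_deriv_le_two⟩
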